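/- Let I be a nonempty open real interval, let k₁, k₂ : ℝ → ℝ be smooth, strictly positive and nonconstant on I, let k₃ : ℝ → ℝ be a function on I, and let f : ℝ → ℝ be smooth and strictly positive on I. Then the system on I: (i) −3·k₁·k₁'·f² − 4·k₁²·f·f' + f·f''' + f'·f'' = 0, (ii) −k₁³·f² − k₁·k₂²·f² + k₁''·f² + 4·k₁'·f·f' + 3·k₁·f·f'' + 2·k₁·(f')² = 0, (iii) 2·k₁'·k₂·f + k₁·k₂'·f + 4·k₁·k₂·f' = 0, (iv) k₁·k₂·k₃ = 0, holds if and only if there exists c > 0 with f = c·k₁^(−1/2)·k₂^(−1/4) on I, k₃ = 0 on I, and equations (i) and (ii) hold on I. -/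

import Mathlib

/-! Dividing (iii) by `4 * k₁ * k₂ * f` turns it into `f'/f = -(1/2) k₁'/k₁ - (1/4) k₂'/k₂`. The
right-hand side is the logarithmic derivative of `k₁ ^ (-1/2) * k₂ ^ (-1/4)`, and on an interval a
nonvanishing function is determined by its logarithmic derivative up to a constant factor. -/

open Set

lemma logDeriv_rpow_const {f : ℝ → ℝ} {x : ℝ} (hf : DifferentiableAt ℝ f x) (hpos : 0 < f x)
    (p : ℝ) : logDeriv (fun t ↦ f t ^ p) x = p * logDeriv f x := by
  have hpow : f x ^ p ≠ 0 := (Real.rpow_pos_of_pos hpos p).ne'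
  rw [logDeriv_apply, logDeriv_apply, deriv_rpow_const hf (.inl hpos.ne'),
    Real.rpow_sub_one hpos.ne']
  field_simp

lemma logDeriv_rpow_mul_rpow {u v : ℝ → ℝ} {x : ℝ} (hu : DifferentiableAt ℝ u x)
    (hv : DifferentiableAt ℝ v x) (hupos : 0 < u x) (hvpos : 0 < v x) (p q : ℝ) :
    logDeriv (fun t ↦ u t ^ p * v t ^ q) x = p * logDeriv u x + q * logDeriv v x := by
  rw [logDeriv_mul x (Real.rpow_pos_of_pos hupos p).ne' (Real.rpow_pos_of_pos hvpos q).ne'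
      (hu.rpow_const (.inl hupos.ne')) (hv.rpow_const (.inl hvpos.ne')),
    logDeriv_rpow_const hu hupos, logDeriv_rpow_const hv hvpos]

lemma logDeriv_eqOn_iff_exists_pos_mul {f g : ℝ → ℝ} {I : Set ℝ} (hIopen : IsOpen I)
    (hIconn : IsPreconnected I) (hf : DifferentiableOn ℝ f I) (hg : DifferentiableOn ℝ g I)
    (hfpos : ∀ s ∈ I, 0 < f s) (hgpos : ∀ s ∈ I, 0 < g s) :
    EqOn (logDeriv f) (logDeriv g) I ↔ ∃ c : ℝ, 0 < c ∧ ∀ s ∈ I, f s = c * g s := by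
  rw [logDeriv_eqOn_iff hf hg hIopen hIconn (fun s hs ↦ (hgpos s hs).ne')
    (fun s hs ↦ (hfpos s hs).ne')]
  constructor
  · rintro ⟨z, hz, hfg⟩
    refine ⟨|z|, abs_pos.2 hz, fun s hs ↦ ?_⟩
    calc f s = |f s| := (abs_of_pos (hfpos s hs)).symm
      _ = |z * g s| := congrArg _ (hfg hs)
      _ = |z| * g s := by rw [abs_mul, abs_of_pos (hgpos s hs)]
  · rintro ⟨c, hc, hfg⟩
    exact ⟨c, hc.ne', hfg⟩

lemma logDeriv_eq_add_iff_exists_pos_mul_rpow_mul_rpow {f u v : ℝ → ℝ} {I : Set ℝ}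
    (hIopen : IsOpen I) (hIconn : IsPreconnected I) (hf : DifferentiableOn ℝ f I)
    (hu : DifferentiableOn ℝ u I) (hv : DifferentiableOn ℝ v I) (hfpos : ∀ s ∈ I, 0 < f s)
    (hupos : ∀ s ∈ I, 0 < u s) (hvpos : ∀ s ∈ I, 0 < v s) (p q : ℝ) :
    (∀ s ∈ I, logDeriv f s = p * logDeriv u s + q * logDeriv v s) ↔
      ∃ c : ℝ, 0 < c ∧ ∀ s ∈ I, f s = c * u s ^ p * v s ^ q := by
  have hg : DifferentiableOn ℝ (fun t ↦ u t ^ p * v t ^ q) I :=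
    (hu.rpow_const fun s hs ↦ .inl (hupos s hs).ne').mul
      (hv.rpow_const fun s hs ↦ .inl (hvpos s hs).ne')
  have hgpos (s : ℝ) (hs : s ∈ I) : 0 < u s ^ p * v s ^ q :=
    mul_pos (Real.rpow_pos_of_pos (hupos s hs) p) (Real.rpow_pos_of_pos (hvpos s hs) q)
  have hlog (s : ℝ) (hs : s ∈ I) :
      logDeriv (fun t ↦ u t ^ p * v t ^ q) s = p * logDeriv u s + q * logDeriv v s :=
    logDeriv_rpow_mul_rpow (hu.differentiableAt (hIopen.mem_nhds hs))
      (hv.differentiableAt (hIopen.mem_nhds hs)) (hupos s hs) (hvpos s hs) p q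
  simp only [mul_assoc]
  rw [← logDeriv_eqOn_iff_exists_pos_mul hIopen hIconn hf hg hfpos hgpos]
  exact forall₂_congr fun s hs ↦ by rw [hlog s hs]

lemma logDeriv_eq_neg_half_mul_add_neg_quarter_mul_iff {f k₁ k₂ : ℝ → ℝ} {s : ℝ}
    (hf : f s ≠ 0) (hk₁ : k₁ s ≠ 0) (hk₂ : k₂ s ≠ 0) :
    logDeriv f s = -(1 / 2) * logDeriv k₁ s + -(1 / 4) * logDeriv k₂ s ↔
      2 * deriv k₁ s * k₂ s * f s + k₁ s * deriv k₂ s * f s + 4 * k₁ s * k₂ s * deriv f s = 0 := by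
  have hfactor : 2 * deriv k₁ s * k₂ s * f s + k₁ s * deriv k₂ s * f s
      + 4 * k₁ s * k₂ s * deriv f s = 4 * k₁ s * k₂ s * f s *
        (logDeriv f s - (-(1 / 2) * logDeriv k₁ s + -(1 / 4) * logDeriv k₂ s)) := by
    simp only [logDeriv_apply]
    field_simp
    ring
  have hne : 4 * k₁ s * k₂ s * f s ≠ 0 := by positivity
  rw [hfactor, mul_eq_zero_iff_left hne, sub_eq_zero]

theorem bi_f_harmonic_euclidean_case_VII_general
    (I : Set ℝ) (hIopen : IsOpen I) (hIconn : I.OrdConnected) (k₁ k₂ : ℝ → ℝ)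
    (hk₁ : ContDiffOn ℝ 2 k₁ I) (hk₂ : DifferentiableOn ℝ k₂ I)
    (hk₁pos : ∀ s ∈ I, 0 < k₁ s) (hk₂pos : ∀ s ∈ I, 0 < k₂ s) (k₃ : ℝ → ℝ)
    (f : ℝ → ℝ) (hf : ContDiffOn ℝ 3 f I) (hfpos : ∀ s ∈ I, 0 < f s) :
    ((∀ s ∈ I, -3 * k₁ s * deriv k₁ s * f s ^ 2 - 4 * k₁ s ^ 2 * f s * deriv f s
        + f s * deriv (deriv (deriv f)) s + deriv f s * deriv (deriv f) s = 0) ∧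
     (∀ s ∈ I, -k₁ s ^ 3 * f s ^ 2 - k₁ s * k₂ s ^ 2 * f s ^ 2
        + deriv (deriv k₁) s * f s ^ 2 + 4 * deriv k₁ s * f s * deriv f s
        + 3 * k₁ s * f s * deriv (deriv f) s + 2 * k₁ s * deriv f s ^ 2 = 0) ∧
     (∀ s ∈ I, 2 * deriv k₁ s * k₂ s * f s + k₁ s * deriv k₂ s * f s
        + 4 * k₁ s * k₂ s * deriv f s = 0) ∧
     (∀ s ∈ I, k₁ s * k₂ s * k₃ s = 0)) ↔
      ((∃ c : ℝ, 0 < c ∧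
          ∀ s ∈ I, f s = c * k₁ s ^ (-(1 / 2 : ℝ)) * k₂ s ^ (-(1 / 4 : ℝ))) ∧
       (∀ s ∈ I, k₃ s = 0) ∧
       (∀ s ∈ I, -3 * k₁ s * deriv k₁ s * f s ^ 2 - 4 * k₁ s ^ 2 * f s * deriv f s
          + f s * deriv (deriv (deriv f)) s + deriv f s * deriv (deriv f) s = 0) ∧
       (∀ s ∈ I, -k₁ s ^ 3 * f s ^ 2 - k₁ s * k₂ s ^ 2 * f s ^ 2
          + deriv (deriv k₁) s * f s ^ 2 + 4 * deriv k₁ s * f s * deriv f s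
          + 3 * k₁ s * f s * deriv (deriv f) s + 2 * k₁ s * deriv f s ^ 2 = 0)) := by
  have hiii : (∀ s ∈ I, 2 * deriv k₁ s * k₂ s * f s + k₁ s * deriv k₂ s * f s
      + 4 * k₁ s * k₂ s * deriv f s = 0) ↔
      ∃ c : ℝ, 0 < c ∧ ∀ s ∈ I, f s = c * k₁ s ^ (-(1 / 2 : ℝ)) * k₂ s ^ (-(1 / 4 : ℝ)) := by
    rw [← logDeriv_eq_add_iff_exists_pos_mul_rpow_mul_rpow hIopen hIconn.isPreconnected
      (hf.differentiableOn (by simp)) (hk₁.differentiableOn (by simp)) hk₂ hfpos hk₁pos hk₂pos]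
    exact forall₂_congr fun s hs ↦ (logDeriv_eq_neg_half_mul_add_neg_quarter_mul_iff
      (hfpos s hs).ne' (hk₁pos s hs).ne' (hk₂pos s hs).ne').symm
  have hiv : (∀ s ∈ I, k₁ s * k₂ s * k₃ s = 0) ↔ ∀ s ∈ I, k₃ s = 0 :=
    forall₂_congr fun s hs ↦
      mul_eq_zero_iff_left (mul_pos (hk₁pos s hs) (hk₂pos s hs)).ne'
  rw [hiii, hiv]
  tauto

/-- Case VII in Euclidean space: for `k₁, k₂` smooth positive nonconstant, the
bi-f-harmonic system holds iff `f = c k₁^(-1/2) k₂^(-1/4)`, `k₃ = 0`, and equations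
(i), (ii) hold. -/
theorem bi_f_harmonic_euclidean_case_VII
    (I : Set ℝ) (hIopen : IsOpen I) (hIne : I.Nonempty) (hIconn : I.OrdConnected)
    (k₁ k₂ : ℝ → ℝ) (hk₁ : ContDiffOn ℝ (⊤ : ℕ∞) k₁ I) (hk₂ : ContDiffOn ℝ (⊤ : ℕ∞) k₂ I)
    (hk₁pos : ∀ s ∈ I, 0 < k₁ s) (hk₂pos : ∀ s ∈ I, 0 < k₂ s)
    (hk₁nc : ¬ ∃ a : ℝ, ∀ s ∈ I, k₁ s = a) (hk₂nc : ¬ ∃ a : ℝ, ∀ s ∈ I, k₂ s = a)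
    (k₃ : ℝ → ℝ)
    (f : ℝ → ℝ) (hf : ContDiffOn ℝ (⊤ : ℕ∞) f I) (hfpos : ∀ s ∈ I, 0 < f s) :
    ((∀ s ∈ I, -3 * k₁ s * deriv k₁ s * f s ^ 2 - 4 * k₁ s ^ 2 * f s * deriv f s
        + f s * deriv (deriv (deriv f)) s + deriv f s * deriv (deriv f) s = 0) ∧
     (∀ s ∈ I, -k₁ s ^ 3 * f s ^ 2 - k₁ s * k₂ s ^ 2 * f s ^ 2
        + deriv (deriv k₁) s * f s ^ 2 + 4 * deriv k₁ s * f s * deriv f s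
        + 3 * k₁ s * f s * deriv (deriv f) s + 2 * k₁ s * deriv f s ^ 2 = 0) ∧
     (∀ s ∈ I, 2 * deriv k₁ s * k₂ s * f s + k₁ s * deriv k₂ s * f s
        + 4 * k₁ s * k₂ s * deriv f s = 0) ∧
     (∀ s ∈ I, k₁ s * k₂ s * k₃ s = 0)) ↔
      ((∃ c : ℝ, 0 < c ∧
          ∀ s ∈ I, f s = c * k₁ s ^ (-(1 / 2 : ℝ)) * k₂ s ^ (-(1 / 4 : ℝ))) ∧
       (∀ s ∈ I, k₃ s = 0) ∧
       (∀ s ∈ I, -3 * k₁ s * deriv k₁ s * f s ^ 2 - 4 * k₁ s ^ 2 * f s * deriv f s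
          + f s * deriv (deriv (deriv f)) s + deriv f s * deriv (deriv f) s = 0) ∧
       (∀ s ∈ I, -k₁ s ^ 3 * f s ^ 2 - k₁ s * k₂ s ^ 2 * f s ^ 2
          + deriv (deriv k₁) s * f s ^ 2 + 4 * deriv k₁ s * f s * deriv f s
          + 3 * k₁ s * f s * deriv (deriv f) s + 2 * k₁ s * deriv f s ^ 2 = 0)) := by
  exact bi_f_harmonic_euclidean_case_VII_general I hIopen hIconn k₁ k₂
    (contDiffOn_infty.1 hk₁ 2) (hk₂.differentiableOn (by simp)) hk₁pos hk₂pos k₃ f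
    (contDiffOn_infty.1 hf 3) hfpos
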